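/- Let R be a finite commutative ring such that Γ(R) is partitionable into global defensive alliances. If γ_a(Γ(R)) = 1, then ψ_g(Γ(R)) = 2. -/

import Mathlib

open Classical

/-- The set of zero-divisors of `R` (including `0`). -/
def zeroDivisorSet (R : Type*) [CommRing R] : Set R :=
  {x : R | ∃ y : R, y ≠ 0 ∧ x * y = 0}

/-- Vertices of the zero-divisor graph: the nonzero zero-divisors of `R`. -/
abbrev ZDV (R : Type*) [CommRing R] : Type _ :=
  {x : R // x ≠ 0 ∧ ∃ y : R, y ≠ 0 ∧ x * y = 0}

/-- The zero-divisor graph `Γ(R)` of a commutative ring `R`: vertices are the nonzero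
zero-divisors, and distinct vertices `x`, `y` are adjacent iff `x * y = 0`. -/
def zdGraph (R : Type*) [CommRing R] : SimpleGraph (ZDV R) where
  Adj a b := a ≠ b ∧ (a : R) * (b : R) = 0
  symm := by
    constructor
    intro a b h
    exact ⟨h.1.symm, by rw [mul_comm]; exact h.2⟩
  loopless := by
    constructor
    intro a h
    exact h.1 rfl

/-- `degIn G S v` is the number of neighbors of `v` lying in `S`. -/
noncomputable def degIn {V : Type*} (G : SimpleGraph V) (S : Set V) (v : V) : ℕ :=
  Set.ncard {u : V | u ∈ S ∧ G.Adj v u}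

/-- `S` is a dominating set: every vertex outside `S` has a neighbor in `S`. -/
def IsDominatingSet {V : Type*} (G : SimpleGraph V) (S : Set V) : Prop :=
  ∀ v ∉ S, ∃ u ∈ S, G.Adj v u

/-- `S` is a defensive alliance: `S` is nonempty and every `v ∈ S` satisfies
`deg_S(v) + 1 ≥ deg_{Sᶜ}(v)`. -/
def IsDefensiveAlliance {V : Type*} (G : SimpleGraph V) (S : Set V) : Prop :=
  S.Nonempty ∧ ∀ v ∈ S, degIn G Sᶜ v ≤ degIn G S v + 1

/-- A global defensive alliance is a defensive alliance that is also a dominating set. -/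
def IsGlobalDefensiveAlliance {V : Type*} (G : SimpleGraph V) (S : Set V) : Prop :=
  IsDefensiveAlliance G S ∧ IsDominatingSet G S

/-- `P` is a partition of the vertex set of `G` into global defensive alliances. -/
def IsGDAPartition {V : Type*} (G : SimpleGraph V) (P : Finset (Set V)) : Prop :=
  (∀ S ∈ P, IsGlobalDefensiveAlliance G S) ∧
  (⋃₀ (P : Set (Set V)) = Set.univ) ∧
  ((P : Set (Set V)).Pairwise Disjoint)

/-- The global defensive alliance partition number `ψ_g(G)`: the maximum number of parts in
a partition of the vertex set into global defensive alliances. -/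
noncomputable def psiG {V : Type*} (G : SimpleGraph V) : ℕ :=
  sSup {n : ℕ | ∃ P : Finset (Set V), IsGDAPartition G P ∧ P.card = n}

/-- `G` is partitionable into global defensive alliances iff `ψ_g(G) ≥ 2`. -/
def PartitionableGDA {V : Type*} (G : SimpleGraph V) : Prop :=
  2 ≤ psiG G

/-- The global defensive alliance number `γ_a(G)`: the minimum cardinality of a global
defensive alliance. -/
noncomputable def gammaA {V : Type*} (G : SimpleGraph V) : ℕ :=
  sInf {n : ℕ | ∃ S : Set V, IsGlobalDefensiveAlliance G S ∧ S.ncard = n}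

/-! If `{v}` is dominating, then `v` is adjacent to every other vertex; if it is also a defensive
alliance, then `v` has at most one neighbor, so the graph has at most two vertices. -/

section

variable {V : Type*} {G : SimpleGraph V}

theorem degIn_singleton_self (G : SimpleGraph V) (v : V) : degIn G {v} v = 0 := by
  have hempty : {u : V | u ∈ ({v} : Set V) ∧ G.Adj v u} = ∅ := by
    ext u
    simp +contextual
  rw [degIn, hempty, Set.ncard_empty]

theorem isDominatingSet_singleton_iff {v : V} :
    IsDominatingSet G {v} ↔ ∀ u ≠ v, G.Adj v u := by
  simp [IsDominatingSet, G.adj_comm v]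

theorem IsDominatingSet.degIn_compl_singleton {v : V} (hv : IsDominatingSet G {v}) :
    degIn G {v}ᶜ v = ({v}ᶜ : Set V).ncard := by
  have hadj := isDominatingSet_singleton_iff.mp hv
  exact congrArg Set.ncard (Set.sep_eq_self_iff_mem_true.mpr hadj)

theorem exists_isGlobalDefensiveAlliance_ncard_eq_gammaA (h : gammaA G ≠ 0) :
    ∃ S : Set V, IsGlobalDefensiveAlliance G S ∧ S.ncard = gammaA G :=
  Nat.sInf_mem (Nat.nonempty_of_pos_sInf (Nat.pos_of_ne_zero h))

theorem exists_isGlobalDefensiveAlliance_singleton (h : gammaA G = 1) :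
    ∃ v : V, IsGlobalDefensiveAlliance G {v} := by
  have hne0 : gammaA G ≠ 0 := h.trans_ne one_ne_zero
  obtain ⟨S, hS, hcard⟩ := exists_isGlobalDefensiveAlliance_ncard_eq_gammaA hne0
  obtain ⟨v, rfl⟩ := Set.ncard_eq_one.mp (hcard.trans h)
  exact ⟨v, hS⟩

variable [Finite V]

theorem IsGlobalDefensiveAlliance.natCard_le_two {v : V} (hv : IsGlobalDefensiveAlliance G {v}) :
    Nat.card V ≤ 2 := by
  obtain ⟨⟨-, hdef⟩, hdom⟩ := hv
  have hcompl : ({v}ᶜ : Set V).ncard ≤ 1 := by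
    simpa only [hdom.degIn_compl_singleton, degIn_singleton_self] using hdef v rfl
  calc
    Nat.card V = ({v} : Set V).ncard + ({v}ᶜ : Set V).ncard :=
      (Set.ncard_add_ncard_compl {v}).symm
    _ ≤ 1 + 1 := by rw [Set.ncard_singleton]; gcongr

theorem card_le_natCard_of_pairwise_disjoint {P : Finset (Set V)}
    (hne : ∀ S ∈ P, S.Nonempty) (hdisj : (P : Set (Set V)).Pairwise Disjoint) :
    P.card ≤ Nat.card V := by
  have := Fintype.ofFinite V
  calc
    P.card ≤ (P.biUnion fun S => S.toFinset).card :=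
      Finset.card_le_card_biUnion (f := fun S => S.toFinset)
        (fun S hS T hT hST => Set.disjoint_toFinset.mpr (hdisj hS hT hST))
        (fun S hS => Set.toFinset_nonempty.mpr (hne S hS))
    _ ≤ Fintype.card V := Finset.card_le_univ _
    _ = Nat.card V := Fintype.card_eq_nat_card

theorem psiG_le_natCard (G : SimpleGraph V) : psiG G ≤ Nat.card V := by
  refine csSup_le' ?_
  rintro _ ⟨P, ⟨hP, -, hdisj⟩, rfl⟩
  exact card_le_natCard_of_pairwise_disjoint (fun S hS => (hP S hS).1.1) hdisj

theorem stmt17_general (G : SimpleGraph V) (hpart : PartitionableGDA G) (h : gammaA G = 1) :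
    psiG G = 2 := by
  obtain ⟨v, hv⟩ := exists_isGlobalDefensiveAlliance_singleton h
  exact le_antisymm ((psiG_le_natCard G).trans hv.natCard_le_two) hpart

end

/-- For a finite commutative ring `R` such that `Γ(R)` is partitionable
into global defensive alliances, if `γ_a(Γ(R)) = 1` then `ψ_g(Γ(R)) = 2`. -/
theorem stmt17 (R : Type*) [CommRing R] [Finite R] [Nontrivial R]
    (hpart : PartitionableGDA (zdGraph R)) (h : gammaA (zdGraph R) = 1) :
    psiG (zdGraph R) = 2 :=
  stmt17_general (zdGraph R) hpart h
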